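/- For n ≥ 3, the graded Betti number β_{n,n+1}(S/in_<(I)) equals 0, where in_<(I) = (y_i y_j : 1 ≤ i < j ≤ n) + (x y_k z : 1 ≤ k ≤ n−1) + (x y_n² z) in S = K[x, y_1, …, y_n, z]. -/

import Mathlib

open MvPolynomial

noncomputable def xP (K : Type*) [Field K] (n : ℕ) : MvPolynomial (Fin (n + 2)) K := X 0
noncomputable def zP (K : Type*) [Field K] (n : ℕ) : MvPolynomial (Fin (n + 2)) K :=
  X (Fin.last (n + 1))
noncomputable def yP (K : Type*) [Field K] (n : ℕ) (i : Fin n) : MvPolynomial (Fin (n + 2)) K :=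
  X i.succ.castSucc

/-- The join-meet ideal `I` of the diamond lattice `D_{n+2}`. -/
noncomputable def diamondIdeal (K : Type*) [Field K] (n : ℕ) :
    Ideal (MvPolynomial (Fin (n + 2)) K) :=
  Ideal.span {f | ∃ i j : Fin n, i < j ∧ f = yP K n i * yP K n j - xP K n * zP K n}

/-- The initial ideal `in_<(I)` of `I` w.r.t. the reverse lexicographic order induced by
`x > y_1 > ⋯ > y_n > z`, as computed in the paper:
`(y_i y_j : i < j) + (x y_k z : k ≤ n-1) + (x y_n² z)`. -/
noncomputable def diamondIni (K : Type*) [Field K] (n : ℕ) (hn : 1 ≤ n) :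
    Ideal (MvPolynomial (Fin (n + 2)) K) :=
  Ideal.span
    ({f | ∃ i j : Fin n, i < j ∧ f = yP K n i * yP K n j} ∪
      {f | ∃ k : Fin n, (k : ℕ) < n - 1 ∧ f = xP K n * yP K n k * zP K n} ∪
      {xP K n * (yP K n ⟨n - 1, by omega⟩) ^ 2 * zP K n})

def mdeg {σ : Type*} (m : σ →₀ ℕ) : ℕ := m.sum fun _ e => e

/-- A minimal graded free resolution
`⋯ → F_{i+1} → F_i → ⋯ → F_0 → S/I → 0` of `S/I` over `S = K[x_s : s ∈ σ]`.
`F_i` is free with finite homogeneous basis `B i`, the basis element `b : B i` having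
degree `deg i b`; the differentials are graded and have entries in the graded maximal
ideal (minimality); `ε` is a lift of the augmentation `F_0 → S/I`. -/
structure MinGradedFreeRes (K : Type*) [Field K] (σ : Type*) (I : Ideal (MvPolynomial σ K)) where
  B : ℕ → Type
  finB : ∀ i, Finite (B i)
  deg : ∀ i, B i → ℕ
  d : ∀ i, ((B (i + 1)) →₀ MvPolynomial σ K) →ₗ[MvPolynomial σ K] ((B i) →₀ MvPolynomial σ K)
  ε : ((B 0) →₀ MvPolynomial σ K) →ₗ[MvPolynomial σ K] MvPolynomial σ K
  ε_homog : ∀ b : B 0, (ε (Finsupp.single b 1)).IsHomogeneous (deg 0 b)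
  surj : ∀ s : MvPolynomial σ K, ∃ t, ε t - s ∈ I
  exact0 : LinearMap.range (d 0) = Submodule.comap ε (I : Submodule _ _)
  exact : ∀ i, LinearMap.range (d (i + 1)) = LinearMap.ker (d i)
  homog : ∀ i (b : B (i + 1)) (c : B i),
    ∀ m ∈ ((d i (Finsupp.single b 1)) c).support, mdeg m + deg i c = deg (i + 1) b
  minimal : ∀ i (b : B (i + 1)) (c : B i), coeff 0 ((d i (Finsupp.single b 1)) c) = 0

/-- The graded Betti number `β_{i,j}(S/I)` read off from a minimal graded free resolution:
the number of basis elements of `F_i` of degree `j`. -/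
noncomputable def MinGradedFreeRes.betti {K : Type*} [Field K] {σ : Type*}
    {I : Ideal (MvPolynomial σ K)} (F : MinGradedFreeRes K σ I) (i j : ℕ) : ℕ :=
  Nat.card {b : F.B i // F.deg i b = j}

/-! In a minimal graded free resolution, the linear parts of the differentials square to zero and
anticommute. Dually, the functionals on the linear strand are generated over the exterior algebra
on the variables by the coefficient functionals of the quadrics in the ideal. If these quadrics are
squarefree in a set `Y` of variables, the functional of `y_p y_q` is annihilated by every variable
outside `Y \ {p, q}`; each further variable yields zero or joins the annihilating ones, so that
nothing is left after `|Y| - 1` steps. By minimality these functionals separate the vectors of the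
linear strand, which therefore vanishes from homological degree `|Y|` on. For the initial ideal of
the diamond, `Y = {y_1, …, y_n}`. -/

attribute [local instance] MvPolynomial.gradedAlgebra

lemma mdeg_eq_degree {σ : Type*} (m : σ →₀ ℕ) : mdeg m = m.degree := by
  rw [Finsupp.degree_apply]
  rfl

/-! ### Existence of minimal graded free resolutions -/

section GradedFreeModule

variable {σ R ι κ : Type*} [CommSemiring R]

/-- The degree-`D` component of a polynomial in the free module `S(-e)`, whose generator has
degree `e`. -/
noncomputable def shiftedComponent (e D : ℕ) : MvPolynomial σ R →ₗ[R] MvPolynomial σ R :=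
  if e ≤ D then homogeneousComponent (D - e) else 0

lemma coeff_shiftedComponent (e D : ℕ) (p : MvPolynomial σ R) (m : σ →₀ ℕ) :
    coeff m (shiftedComponent e D p) = if m.degree + e = D then coeff m p else 0 := by
  by_cases h : e ≤ D
  · simp only [shiftedComponent, if_pos h, coeff_homogeneousComponent, eq_tsub_iff_add_eq_of_le h]
  · rw [shiftedComponent, if_neg h, if_neg (by omega), LinearMap.zero_apply, coeff_zero]

lemma shiftedComponent_mul {e e' : ℕ} (D : ℕ) (p : MvPolynomial σ R) {q : MvPolynomial σ R}
    (hq : ∀ m ∈ q.support, m.degree + e = e') :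
    shiftedComponent e D (p * q) = shiftedComponent e' D p * q := by
  classical
  ext m
  rw [coeff_shiftedComponent, coeff_mul, coeff_mul, ← boole_mul, Finset.mul_sum]
  refine Finset.sum_congr rfl fun x hx => ?_
  by_cases hx₂ : coeff x.2 q = 0
  · simp only [hx₂, mul_zero]
  have degree_eq : m.degree + e = x.1.degree + e' := by
    rw [← Finset.HasAntidiagonal.mem_antidiagonal.mp hx, map_add, add_assoc,
      hq _ (mem_support_iff.mpr hx₂)]
  rw [coeff_shiftedComponent, degree_eq, boole_mul, ite_mul, zero_mul]

/-- `f`, a vector of a free module over `R[x_s : s ∈ σ]` with basis elements of degrees `deg`, is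
homogeneous of degree `D`. -/
def IsHomogeneousVector (deg : ι → ℕ) (D : ℕ) (f : ι →₀ MvPolynomial σ R) : Prop :=
  ∀ c, ∀ m ∈ (f c).support, m.degree + deg c = D

/-- The degree-`D` component of a vector of a finite free module over `R[x_s : s ∈ σ]` with basis
elements of degrees `deg`. -/
noncomputable def gradedComponent [Finite ι] (deg : ι → ℕ) (D : ℕ)
    (f : ι →₀ MvPolynomial σ R) : ι →₀ MvPolynomial σ R :=
  Finsupp.equivFunOnFinite.symm fun b => shiftedComponent (deg b) D (f b)

section

variable [Finite ι] (deg : ι → ℕ) (D : ℕ) (f : ι →₀ MvPolynomial σ R)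

lemma gradedComponent_apply (b : ι) :
    gradedComponent deg D f b = shiftedComponent (deg b) D (f b) := rfl

lemma coeff_gradedComponent (b : ι) (m : σ →₀ ℕ) :
    coeff m (gradedComponent deg D f b) = if m.degree + deg b = D then coeff m (f b) else 0 :=
  coeff_shiftedComponent _ _ _ _

lemma gradedComponent_zero : gradedComponent deg D (0 : ι →₀ MvPolynomial σ R) = 0 := by
  ext1 b
  simp only [gradedComponent_apply, Finsupp.zero_apply, map_zero]

lemma isHomogeneousVector_gradedComponent :
    IsHomogeneousVector deg D (gradedComponent deg D f) := by
  intro c m hm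
  rw [mem_support_iff, coeff_gradedComponent] at hm
  exact (ite_ne_right_iff.mp hm).1

lemma exists_sum_gradedComponent_eq :
    ∃ N, ∑ D ∈ Finset.range N, gradedComponent deg D f = f := by
  have := Fintype.ofFinite ι
  refine ⟨∑ b, ((f b).totalDegree + deg b) + 1, ?_⟩
  ext b m
  simp only [Finsupp.finsetSum_apply, coeff_sum, coeff_gradedComponent, Finset.sum_ite_eq]
  rw [ite_eq_left_iff, Finset.mem_range, Nat.lt_succ_iff]
  intro hlarge
  by_contra hne
  have degree_le : m.degree ≤ (f b).totalDegree :=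
    le_totalDegree (mem_support_iff.mpr (Ne.symm hne))
  have le_sum := Finset.single_le_sum (f := fun b => (f b).totalDegree + deg b)
    (fun _ _ => Nat.zero_le _) (Finset.mem_univ b)
  omega

end

lemma map_eq_sum_smul [Fintype ι] {S M : Type*} [Semiring S] [AddCommMonoid M] [Module S M]
    (L : (ι →₀ S) →ₗ[S] M) (f : ι →₀ S) : L f = ∑ b, f b • L (Finsupp.single b 1) := by
  conv_lhs => rw [← Finsupp.univ_sum_single f, map_sum]
  simp only [← map_smul, Finsupp.smul_single_one]

lemma map_gradedComponent [Finite ι] [Finite κ] {deg : ι → ℕ} {deg' : κ → ℕ}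
    {φ : (κ →₀ MvPolynomial σ R) →ₗ[MvPolynomial σ R] (ι →₀ MvPolynomial σ R)}
    (hφ : ∀ b, IsHomogeneousVector deg (deg' b) (φ (Finsupp.single b 1))) (D : ℕ)
    (f : κ →₀ MvPolynomial σ R) :
    φ (gradedComponent deg' D f) = gradedComponent deg D (φ f) := by
  have := Fintype.ofFinite κ
  ext1 c
  rw [map_eq_sum_smul φ f, map_eq_sum_smul φ (gradedComponent deg' D f)]
  simp only [gradedComponent_apply, Finsupp.finsetSum_apply, Finsupp.smul_apply, smul_eq_mul,
    map_sum, shiftedComponent_mul D _ (hφ _ c)]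

/-- A submodule of a graded finite free module over `R[x_s : s ∈ σ]` is graded if it contains the
homogeneous components of its elements. -/
def IsGradedSubmodule [Finite ι] (deg : ι → ℕ)
    (N : Submodule (MvPolynomial σ R) (ι →₀ MvPolynomial σ R)) : Prop :=
  ∀ f ∈ N, ∀ D, gradedComponent deg D f ∈ N

lemma isGradedSubmodule_ker [Finite ι] [Finite κ] {deg : ι → ℕ} {deg' : κ → ℕ}
    {φ : (κ →₀ MvPolynomial σ R) →ₗ[MvPolynomial σ R] (ι →₀ MvPolynomial σ R)}
    (hφ : ∀ b, IsHomogeneousVector deg (deg' b) (φ (Finsupp.single b 1))) :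
    IsGradedSubmodule deg' (LinearMap.ker φ) := by
  intro f hf D
  rw [LinearMap.mem_ker] at hf ⊢
  rw [map_gradedComponent hφ, hf, gradedComponent_zero]

lemma IsGradedSubmodule.span_homogeneous [Finite ι] {deg : ι → ℕ}
    {N : Submodule (MvPolynomial σ R) (ι →₀ MvPolynomial σ R)} (hN : IsGradedSubmodule deg N) :
    Submodule.span (MvPolynomial σ R) {f ∈ N | ∃ D, IsHomogeneousVector deg D f} = N := by
  refine le_antisymm (Submodule.span_le.mpr fun f hf => hf.1) fun f hf => ?_
  obtain ⟨k, hk⟩ := exists_sum_gradedComponent_eq deg f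
  rw [← hk]
  exact Submodule.sum_mem _ fun D _ =>
    Submodule.subset_span ⟨hN f hf D, D, isHomogeneousVector_gradedComponent deg D f⟩

/-- `N` is generated by `k` homogeneous vectors. -/
def HasHomogeneousGenerators (deg : ι → ℕ)
    (N : Submodule (MvPolynomial σ R) (ι →₀ MvPolynomial σ R)) (k : ℕ) : Prop :=
  ∃ (g : Fin k → ι →₀ MvPolynomial σ R) (deg' : Fin k → ℕ),
    (∀ j, IsHomogeneousVector deg (deg' j) (g j)) ∧
      Submodule.span (MvPolynomial σ R) (Set.range g) = N

lemma IsGradedSubmodule.exists_hasHomogeneousGenerators [Finite ι] {deg : ι → ℕ}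
    {N : Submodule (MvPolynomial σ R) (ι →₀ MvPolynomial σ R)} (hN : IsGradedSubmodule deg N)
    (hfg : N.FG) : ∃ k, HasHomogeneousGenerators deg N k := by
  rw [← hN.span_homogeneous, Submodule.fg_span_iff_fg_span_finset_subset] at hfg
  obtain ⟨s, hs, hspan⟩ := hfg
  choose deg' hdeg' using fun j => (hs (s.equivFin.symm j).2).2
  refine ⟨s.card, fun j => s.equivFin.symm j, deg', hdeg', ?_⟩
  rw [← hN.span_homogeneous, hspan]
  congr 1
  exact (s.equivFin.symm.surjective.range_comp Subtype.val).trans Subtype.range_coe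

end GradedFreeModule

lemma span_range_comp_succAbove {S M : Type*} [Ring S] [AddCommGroup M] [Module S M] {k : ℕ}
    {g : Fin (k + 1) → M} {a : Fin (k + 1) → S} {c : Fin (k + 1)} (hc : IsUnit (a c))
    (ha : ∑ i, a i • g i = 0) :
    Submodule.span S (Set.range (g ∘ c.succAbove)) = Submodule.span S (Set.range g) := by
  refine le_antisymm (Submodule.span_mono (Set.range_comp_subset_range _ _)) ?_
  have others_mem (i : Fin k) :
      g (c.succAbove i) ∈ Submodule.span S (Set.range (g ∘ c.succAbove)) :=
    Submodule.subset_span ⟨i, rfl⟩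
  have self_mem : g c ∈ Submodule.span S (Set.range (g ∘ c.succAbove)) := by
    rw [Fin.sum_univ_succAbove _ c, add_eq_zero_iff_eq_neg] at ha
    rw [← Submodule.smul_mem_iff_of_isUnit _ hc, ha]
    exact neg_mem (Submodule.sum_mem _ fun i _ => Submodule.smul_mem _ _ (others_mem i))
  rw [Submodule.span_le]
  rintro _ ⟨j, rfl⟩
  obtain rfl | ⟨i, rfl⟩ := Fin.eq_self_or_eq_succAbove c j
  · exact self_mem
  · exact others_mem i

section MinimalGenerators

variable {K σ ι : Type*} [Field K]

/-- A unit coefficient in a syzygy would make the corresponding generator redundant; passing to a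
homogeneous component of the syzygy turns a nonzero constant term into such a unit. -/
lemma coeff_zero_eq_zero_of_mem_ker {deg : ι → ℕ} [Finite ι]
    {N : Submodule (MvPolynomial σ K) (ι →₀ MvPolynomial σ K)} {k : ℕ}
    (hmin : ∀ j < k, ¬ HasHomogeneousGenerators deg N j)
    {g : Fin k → ι →₀ MvPolynomial σ K} {deg' : Fin k → ℕ}
    (hg : ∀ j, IsHomogeneousVector deg (deg' j) (g j))
    (hspan : Submodule.span (MvPolynomial σ K) (Set.range g) = N)
    {f : Fin k →₀ MvPolynomial σ K}
    (hf : f ∈ LinearMap.ker (Finsupp.linearCombination (MvPolynomial σ K) g)) (c : Fin k) :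
    coeff 0 (f c) = 0 := by
  by_contra hne
  obtain ⟨k, rfl⟩ := Nat.exists_eq_add_one.mpr c.pos
  have component_mem := isGradedSubmodule_ker (deg := deg) (deg' := deg')
    (by simpa only [Finsupp.linearCombination_single, one_smul] using hg) f hf (deg' c)
  rw [LinearMap.mem_ker, map_eq_sum_smul] at component_mem
  simp only [Finsupp.linearCombination_single, one_smul] at component_mem
  have component_apply : gradedComponent deg' (deg' c) f c = C (coeff 0 (f c)) := by
    ext m
    rw [coeff_gradedComponent]
    obtain rfl | hm := eq_or_ne m 0
    · rw [map_zero, zero_add, if_pos rfl, coeff_zero_C]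
    · have := (Finsupp.degree_eq_zero_iff m).not.mpr hm
      rw [if_neg (by omega), coeff_C_of_ne_zero hm]
  refine hmin k k.lt_succ_self ⟨g ∘ c.succAbove, deg' ∘ c.succAbove, fun j => hg _, ?_⟩
  rw [← hspan]
  refine span_range_comp_succAbove ?_ component_mem
  rw [component_apply]
  exact (isUnit_iff_ne_zero.mpr hne).map C

end MinimalGenerators

/-- One stage of the construction of a minimal graded free resolution: a graded free module of
finite rank together with the graded submodule of relations, contained in `𝔪 F`, that the next
stage has to resolve. -/
structure SyzygyStage (K σ : Type*) [Field K] where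
  rank : ℕ
  deg : Fin rank → ℕ
  relations : Submodule (MvPolynomial σ K) (Fin rank →₀ MvPolynomial σ K)
  isGraded : IsGradedSubmodule deg relations
  coeff_zero : ∀ f ∈ relations, ∀ c, coeff 0 (f c) = 0

lemma SyzygyStage.exists_next {K σ : Type*} [Field K] [Finite σ] (T : SyzygyStage K σ) :
    ∃ (T' : SyzygyStage K σ)
      (d : (Fin T'.rank →₀ MvPolynomial σ K) →ₗ[MvPolynomial σ K]
        (Fin T.rank →₀ MvPolynomial σ K)),
      LinearMap.range d = T.relations ∧ LinearMap.ker d = T'.relations ∧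
        ∀ b, IsHomogeneousVector T.deg (T'.deg b) (d (Finsupp.single b 1)) := by
  classical
  have hex := T.isGraded.exists_hasHomogeneousGenerators (IsNoetherian.noetherian T.relations)
  obtain ⟨g, deg', hg, hspan⟩ := Nat.find_spec hex
  let d := Finsupp.linearCombination (MvPolynomial σ K) g
  have hd (b) : IsHomogeneousVector T.deg (deg' b) (d (Finsupp.single b 1)) := by
    simpa only [d, Finsupp.linearCombination_single, one_smul] using hg b
  exact ⟨⟨_, deg', LinearMap.ker d, isGradedSubmodule_ker hd,
      fun f hf => coeff_zero_eq_zero_of_mem_ker (fun _ => Nat.find_min hex) hg hspan hf⟩,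
    d, (Finsupp.range_linearCombination _).trans hspan, rfl, hd⟩

lemma coeff_zero_eq_zero_of_mem_idealOfVars {R σ : Type*} [CommSemiring R]
    {f : MvPolynomial σ R} (hf : f ∈ idealOfVars σ R) : coeff 0 f = 0 := by
  rw [← pow_one (idealOfVars σ R), mem_pow_idealOfVars_iff'] at hf
  exact hf 0 (by simp)

/-- The first stage of the resolution of `S/I`: the free module `S`, with relations `I`. -/
noncomputable def SyzygyStage.ofIdeal {K σ : Type*} [Field K] (I : Ideal (MvPolynomial σ K))
    (hI : I.IsHomogeneous (homogeneousSubmodule σ K)) (hle : I ≤ idealOfVars σ K) :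
    SyzygyStage K σ where
  rank := 1
  deg _ := 0
  relations := Submodule.comap (Finsupp.lapply 0) (I : Submodule _ _)
  isGraded f hf D := by
    have component_eq : gradedComponent (fun _ => 0) D f 0 = homogeneousComponent D (f 0) := by
      rw [gradedComponent_apply, shiftedComponent, if_pos D.zero_le, Nat.sub_zero]
    rw [Submodule.mem_comap, Finsupp.lapply_apply, component_eq]
    exact homogeneousComponent_mem_of_mem hI hf D
  coeff_zero f hf c := by
    rw [Subsingleton.elim c 0]
    exact coeff_zero_eq_zero_of_mem_idealOfVars (hle hf)

namespace MinGradedFreeRes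

variable {K σ : Type*} [Field K] {I : Ideal (MvPolynomial σ K)}

theorem nonempty_of_isHomogeneous [Finite σ] (hI : I.IsHomogeneous (homogeneousSubmodule σ K))
    (hle : I ≤ idealOfVars σ K) : Nonempty (MinGradedFreeRes K σ I) := by
  choose next d range_d ker_d d_homogeneous using SyzygyStage.exists_next (K := K) (σ := σ)
  let stage : ℕ → SyzygyStage K σ :=
    fun i => Nat.rec (SyzygyStage.ofIdeal I hI hle) (fun _ T => next T) i
  exact ⟨{
    B := fun i => Fin (stage i).rank
    finB := fun i => inferInstance
    deg := fun i => (stage i).deg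
    d := fun i => d (stage i)
    ε := Finsupp.lapply (0 : Fin 1)
    ε_homog := by
      intro (b : Fin 1)
      change (Finsupp.single b (1 : MvPolynomial σ K) 0).IsHomogeneous 0
      rw [Subsingleton.elim b 0, Finsupp.single_eq_same]
      exact isHomogeneous_one σ K
    surj := by
      intro s
      refine ⟨(Finsupp.single (0 : Fin 1) s : Fin 1 →₀ MvPolynomial σ K), ?_⟩
      change Finsupp.single (0 : Fin 1) s 0 - s ∈ I
      rw [Finsupp.single_eq_same, sub_self]
      exact zero_mem I
    exact0 := range_d (SyzygyStage.ofIdeal I hI hle)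
    exact := fun i => (range_d (next (stage i))).trans (ker_d (stage i)).symm
    homog := by
      intro i b c m hm
      rw [mdeg_eq_degree]
      exact d_homogeneous (stage i) b c m hm
    minimal := by
      intro i b c
      refine (stage i).coeff_zero _ ?_ c
      rw [← range_d (stage i)]
      exact LinearMap.mem_range_self _ _ }⟩

end MinGradedFreeRes

/-! ### The end of the linear strand -/

lemma single_one_le_of_mem_support {σ : Type*} {m : σ →₀ ℕ} {v : σ} (hv : v ∈ m.support) :
    Finsupp.single v 1 ≤ m :=
  Finsupp.single_le_iff.mpr (Nat.one_le_iff_ne_zero.mpr (Finsupp.mem_support_iff.mp hv))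

lemma coeff_mul_eq_sum_support {R σ : Type*} [CommSemiring R] {f g : MvPolynomial σ R}
    {m : σ →₀ ℕ} (hf : coeff 0 f = 0) (hg : ∀ a ∈ g.support, m.degree ≤ a.degree + 1) :
    coeff m (f * g) =
      ∑ v ∈ m.support, coeff (Finsupp.single v 1) f * coeff (m - Finsupp.single v 1) g := by
  classical
  rw [coeff_mul]
  symm
  refine Finset.sum_of_injOn (fun v => (Finsupp.single v 1, m - Finsupp.single v 1)) ?_ ?_ ?_
    fun v _ => rfl
  · intro v _ w _ h
    exact Finsupp.single_left_injective one_ne_zero (Prod.ext_iff.mp h).1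
  · intro v hv
    exact Finset.HasAntidiagonal.mem_antidiagonal.mpr
      (add_tsub_cancel_of_le (single_one_le_of_mem_support hv))
  · rintro ⟨a, b⟩ hab not_linear
    rw [Finset.HasAntidiagonal.mem_antidiagonal] at hab
    by_contra hne
    have a_ne_zero : a.degree ≠ 0 := fun h =>
      left_ne_zero_of_mul hne ((Finsupp.degree_eq_zero_iff a).mp h ▸ hf)
    have b_large := hg b (mem_support_iff.mpr (right_ne_zero_of_mul hne))
    obtain ⟨v, rfl⟩ : a ∈ Set.range fun v => Finsupp.single v 1 := by
      have degree_add : a.degree + b.degree = m.degree := by rw [← hab, map_add]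
      have degree_eq_one : a.degree = 1 := by omega
      rw [Finsupp.range_single_one]
      exact degree_eq_one
    refine not_linear ⟨v, ?_, ?_⟩
    · simp [← hab]
    · simp [← hab]

/-- The ideal generated by the squarefree quadratic monomials in the variables of `Y`, that is, the
edge ideal of the complete graph on `Y`. -/
noncomputable def squarefreeQuadricIdeal {σ : Type*} (R : Type*) [CommSemiring R] (Y : Finset σ) :
    Ideal (MvPolynomial σ R) :=
  Ideal.span {f | ∃ p ∈ Y, ∃ q ∈ Y, p ≠ q ∧ f = X p * X q}

lemma exists_eq_add_or_three_le_degree {R σ : Type*} [CommSemiring R] {Y : Finset σ}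
    {f : MvPolynomial σ R} (hf : f ∈ squarefreeQuadricIdeal R Y ⊔ idealOfVars σ R ^ 3)
    {m : σ →₀ ℕ} (hm : m ∈ f.support) :
    (∃ p ∈ Y, ∃ q ∈ Y, p ≠ q ∧ m = Finsupp.single p 1 + Finsupp.single q 1) ∨
      3 ≤ m.degree := by
  classical
  have eq_span : squarefreeQuadricIdeal R Y = Ideal.span ((fun s => monomial s (1 : R)) ''
      {s | ∃ p ∈ Y, ∃ q ∈ Y, p ≠ q ∧ s = Finsupp.single p 1 + Finsupp.single q 1}) := by
    rw [squarefreeQuadricIdeal]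
    congr 1
    ext f
    simp only [X, monomial_mul, one_mul, Set.mem_ofPred_eq, Set.mem_image]
    grind
  obtain ⟨g, hg, h, hh, rfl⟩ := Submodule.mem_sup.mp hf
  rw [mem_pow_idealOfVars_iff] at hh
  rw [eq_span, mem_ideal_span_monomial_image] at hg
  obtain hm | hm := Finset.mem_union.mp (support_add hm)
  · obtain ⟨_, ⟨p, hp, q, hq, hpq, rfl⟩, hle⟩ := hg m hm
    obtain ⟨t, rfl⟩ := exists_add_of_le hle
    obtain rfl | ht := eq_or_ne t 0
    · exact Or.inl ⟨p, hp, q, hq, hpq, add_zero _⟩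
    · right
      have := (Finsupp.degree_eq_zero_iff t).not.mpr ht
      simp only [map_add, Finsupp.degree_single]
      omega
  · exact Or.inr (hh m hm)

lemma squarefreeQuadricIdeal_sup_le_idealOfVars_sq {R σ : Type*} [CommSemiring R] (Y : Finset σ) :
    squarefreeQuadricIdeal R Y ⊔ idealOfVars σ R ^ 3 ≤ idealOfVars σ R ^ 2 := by
  refine sup_le ?_ (Ideal.pow_le_pow_right (by norm_num))
  rw [squarefreeQuadricIdeal, Ideal.span_le]
  rintro _ ⟨p, -, q, -, -, rfl⟩
  rw [SetLike.mem_coe, pow_two]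
  exact Ideal.mul_mem_mul (Ideal.subset_span ⟨p, rfl⟩) (Ideal.subset_span ⟨q, rfl⟩)

lemma squarefreeQuadricIdeal_sup_le_idealOfVars {R σ : Type*} [CommSemiring R] (Y : Finset σ) :
    squarefreeQuadricIdeal R Y ⊔ idealOfVars σ R ^ 3 ≤ idealOfVars σ R :=
  (squarefreeQuadricIdeal_sup_le_idealOfVars_sq Y).trans (Ideal.pow_le_self two_ne_zero)

lemma tsub_single_ne_of_notMem_erase {σ : Type*} [DecidableEq σ] {Y : Finset σ}
    {p q p' q' v w : σ} (hv : v ∉ (Y.erase p).erase q) (hwv : w ≠ v) (hp' : p' ∈ Y)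
    (hq' : q' ∈ Y) (hpq' : p' ≠ q') :
    Finsupp.single v 1 + (Finsupp.single p 1 + Finsupp.single q 1) - Finsupp.single w 1 ≠
      Finsupp.single p' 1 + Finsupp.single q' 1 := by
  -- The exponent of `v` on the left is at least `2` if `v ∈ {p, q}`; otherwise `v ∉ Y`.
  intro heq
  have exponent_v := DFunLike.congr_fun heq v
  simp only [Finsupp.tsub_apply, Finsupp.add_apply, Finsupp.single_apply] at exponent_v
  grind

namespace MinGradedFreeRes

open scoped Matrix

variable {K σ : Type*} [Field K] {I : Ideal (MvPolynomial σ K)} (F : MinGradedFreeRes K σ I)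

noncomputable instance (i : ℕ) : Fintype (F.B i) :=
  have := F.finB i
  Fintype.ofFinite _

/-- The matrix of the differential `F_{i+1} → F_i`; it acts on row vectors from the right. -/
noncomputable def differentialMatrix (i : ℕ) :
    Matrix (F.B (i + 1)) (F.B i) (MvPolynomial σ K) :=
  Matrix.of fun b c => F.d i (Finsupp.single b 1) c

/-- The coefficients at the monomial `m` of the matrix of the differential `F_{i+1} → F_i`. -/
noncomputable def coeffMatrix (i : ℕ) (m : σ →₀ ℕ) : Matrix (F.B (i + 1)) (F.B i) K :=
  (F.differentialMatrix i).map (coeff m)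

/-- The coefficients at the variable `v` of the linear part of the differential
`F_{i+1} → F_i`. -/
noncomputable abbrev linearPart (i : ℕ) (v : σ) : Matrix (F.B (i + 1)) (F.B i) K :=
  F.coeffMatrix i (Finsupp.single v 1)

/-- The generators of `I` that are the images of the basis of `F_1` in `S`. -/
noncomputable def generator (b : F.B 1) : MvPolynomial σ K :=
  F.ε (F.d 0 (Finsupp.single b 1))

/-- The coefficients at the monomial `m` of the minimal generators of `I`. -/
noncomputable def generatorCoeff (m : σ →₀ ℕ) (b : F.B 1) : K :=
  coeff m (F.generator b)

lemma d_apply (i : ℕ) (f : F.B (i + 1) →₀ MvPolynomial σ K) (c : F.B i) :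
    F.d i f c = ∑ b, f b * F.differentialMatrix i b c := by
  rw [map_eq_sum_smul (F.d i) f, Finsupp.finsetSum_apply]
  rfl

lemma d_d (i : ℕ) (f : F.B (i + 1 + 1) →₀ MvPolynomial σ K) : F.d i (F.d (i + 1) f) = 0 := by
  rw [← LinearMap.mem_ker, ← F.exact i]
  exact LinearMap.mem_range_self _ f

lemma ε_d_mem (f : F.B 1 →₀ MvPolynomial σ K) : F.ε (F.d 0 f) ∈ I := by
  have : F.d 0 f ∈ Submodule.comap F.ε (I : Submodule _ _) :=
    F.exact0 ▸ LinearMap.mem_range_self _ f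
  exact this

lemma coeff_zero_d (i : ℕ) (f : F.B (i + 1) →₀ MvPolynomial σ K) (c : F.B i) :
    coeff 0 (F.d i f c) = 0 := by
  rw [d_apply, coeff_sum]
  refine Finset.sum_eq_zero fun b _ => ?_
  rw [← constantCoeff_eq, map_mul]
  exact mul_eq_zero_of_right _ (F.minimal i b c)

lemma coeff_zero_differentialMatrix (i : ℕ) (b : F.B (i + 1)) (c : F.B i) :
    coeff 0 (F.differentialMatrix i b c) = 0 := F.minimal i b c

lemma differentialMatrix_mul (i : ℕ) :
    F.differentialMatrix (i + 1) * F.differentialMatrix i = 0 := by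
  ext1 b c
  exact (F.d_apply i _ c).symm.trans (DFunLike.congr_fun (F.d_d i _) c)

lemma differentialMatrix_mulVec_generator : F.differentialMatrix 1 *ᵥ F.generator = 0 := by
  ext1 b
  have := map_eq_sum_smul (F.ε ∘ₗ F.d 0) (F.d 1 (Finsupp.single b 1))
  rw [LinearMap.comp_apply, d_d, map_zero] at this
  exact this.symm

lemma degree_add_deg {i : ℕ} {m : σ →₀ ℕ} {b : F.B (i + 1)} {c : F.B i}
    (h : F.coeffMatrix i m b c ≠ 0) : m.degree + F.deg i c = F.deg (i + 1) b := by
  rw [← mdeg_eq_degree]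
  exact F.homog i b c m (mem_support_iff.mpr h)

lemma degree_ne_zero_of_coeffMatrix_ne_zero {i : ℕ} {m : σ →₀ ℕ} {b : F.B (i + 1)} {c : F.B i}
    (h : F.coeffMatrix i m b c ≠ 0) : m.degree ≠ 0 := by
  intro hm
  rw [Finsupp.degree_eq_zero_iff] at hm
  subst hm
  exact h (F.minimal i b c)

lemma sum_coeffMatrix_mul (i : ℕ) {m : σ →₀ ℕ} (hm : m.degree ≤ 2) :
    ∑ v ∈ m.support, F.linearPart (i + 1) v * F.coeffMatrix i (m - Finsupp.single v 1) = 0 := by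
  ext b c
  have := congrArg (coeff m) (congrFun₂ (F.differentialMatrix_mul i) b c)
  rw [Matrix.mul_apply, coeff_sum, Finset.sum_congr rfl fun e _ => coeff_mul_eq_sum_support
    (F.coeff_zero_differentialMatrix (i + 1) b e) fun a ha => ?_, Finset.sum_comm] at this
  · simp only [Matrix.sum_apply, Matrix.mul_apply]
    exact this
  · have := F.degree_ne_zero_of_coeffMatrix_ne_zero (i := i) (mem_support_iff.mp ha)
    omega

lemma linearPart_mul_self (i : ℕ) (v : σ) : F.linearPart (i + 1) v * F.linearPart i v = 0 := by
  have := F.sum_coeffMatrix_mul i (m := Finsupp.single v 2) (by rw [Finsupp.degree_single])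
  rwa [Finsupp.support_single v two_ne_zero, Finset.sum_singleton,
    ← Finsupp.single_tsub] at this

lemma linearPart_mul_comm_neg (i : ℕ) {v w : σ} (h : v ≠ w) :
    F.linearPart (i + 1) v * F.linearPart i w = -(F.linearPart (i + 1) w * F.linearPart i v) := by
  classical
  have := F.sum_coeffMatrix_mul i (m := Finsupp.single v 1 + Finsupp.single w 1)
    (by simp only [map_add, Finsupp.degree_single, le_refl])
  rw [Finsupp.support_single_add_single h one_ne_zero one_ne_zero, Finset.sum_pair h,
    add_tsub_cancel_left, add_tsub_cancel_right] at this
  exact eq_neg_of_add_eq_zero_left this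

lemma eq_zero_of_forall_vecMul_coeffMatrix (i : ℕ) (u : F.B (i + 1) → K)
    (h : ∀ m, u ᵥ* F.coeffMatrix i m = 0) : u = 0 := by
  let const : F.B (i + 1) →₀ MvPolynomial σ K := Finsupp.equivFunOnFinite.symm fun b => C (u b)
  have const_mem : const ∈ LinearMap.ker (F.d i) := by
    ext c m
    rw [d_apply, coeff_sum]
    simp only [const, Finsupp.equivFunOnFinite_symm_apply_apply, coeff_C_mul]
    exact congrFun (h m) c
  rw [← F.exact i] at const_mem
  obtain ⟨t, ht⟩ := const_mem
  ext b
  have := F.coeff_zero_d (i + 1) t b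
  rwa [ht, Finsupp.equivFunOnFinite_symm_apply_apply, coeff_zero_C] at this

lemma exists_coeffMatrix_ne_zero (i : ℕ) (b : F.B (i + 1)) :
    ∃ m c, F.coeffMatrix i m b c ≠ 0 := by
  classical
  by_contra! h
  have single_eq_zero : Pi.single b (1 : K) = 0 :=
    F.eq_zero_of_forall_vecMul_coeffMatrix i _ fun m => by
      rw [Matrix.single_one_vecMul]
      exact funext (h m)
  exact one_ne_zero (Pi.single_eq_zero_iff.mp single_eq_zero)

/-- By minimality, a relation between the images of the basis elements has no unit coefficient. -/
lemma eq_of_ε_single_eq_C {c : F.B 0} {r : K} (hr : r ≠ 0)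
    (hc : F.ε (Finsupp.single c 1) = C r) (c' : F.B 0) : c' = c := by
  by_contra hne
  let relation : F.B 0 →₀ MvPolynomial σ K :=
    Finsupp.single c' 1 - (C r⁻¹ * F.ε (Finsupp.single c' 1)) • Finsupp.single c 1
  have ε_relation : F.ε relation = 0 := by
    rw [map_sub, map_smul, hc, smul_eq_mul, mul_right_comm, ← C_mul, inv_mul_cancel₀ hr, C_1,
      one_mul, sub_self]
  obtain ⟨t, ht⟩ : relation ∈ LinearMap.range (F.d 0) := by
    rw [F.exact0, Submodule.mem_comap, ε_relation]
    exact zero_mem _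
  have relation_apply : relation c' = 1 := by
    simp [relation, Finsupp.single_eq_of_ne hne]
  have := F.coeff_zero_d 0 t c'
  rw [ht, relation_apply, coeff_zero_one] at this
  exact one_ne_zero this

section Augmentation

variable (hI : I ≤ idealOfVars σ K)
include hI

lemma exists_ε_single_eq_C :
    ∃ (c : F.B 0) (r : K), r ≠ 0 ∧ F.ε (Finsupp.single c 1) = C r := by
  obtain ⟨t, ht⟩ := F.surj 1
  have coeff_ε : coeff 0 (F.ε t) = 1 := by
    have := coeff_zero_eq_zero_of_mem_idealOfVars (hI ht)
    rwa [coeff_sub, coeff_zero_one, sub_eq_zero] at this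
  rw [map_eq_sum_smul F.ε t, coeff_sum] at coeff_ε
  obtain ⟨c, -, hc⟩ := Finset.exists_ne_zero_of_sum_ne_zero (coeff_ε ▸ one_ne_zero)
  rw [smul_eq_mul, ← constantCoeff_eq, map_mul] at hc
  have coeff_ne_zero := right_ne_zero_of_mul hc
  have isHomogeneous_zero : (F.ε (Finsupp.single c 1)).IsHomogeneous 0 := by
    have := F.ε_homog c
    rwa [← this coeff_ne_zero, map_zero] at this
  exact ⟨c, _, coeff_ne_zero,
    totalDegree_eq_zero_iff_eq_C.mp (Nat.le_zero.mp isHomogeneous_zero.totalDegree_le)⟩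

lemma exists_ε_eq_C_mul : ∃ r : K, r ≠ 0 ∧ ∀ f c, F.ε f = C r * f c := by
  obtain ⟨c₀, r, hr, hc₀⟩ := F.exists_ε_single_eq_C hI
  refine ⟨r, hr, fun f c => ?_⟩
  have eq_c₀ := F.eq_of_ε_single_eq_C hr hc₀
  rw [map_eq_sum_smul F.ε f, Fintype.sum_eq_single c₀ fun b hb => (hb (eq_c₀ b)).elim, hc₀,
    eq_c₀ c, smul_eq_mul, mul_comm]

lemma deg_zero_eq_zero (c : F.B 0) : F.deg 0 c = 0 := by
  obtain ⟨r, hr, hε⟩ := F.exists_ε_eq_C_mul hI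
  have := F.ε_homog c
  rw [hε _ c, Finsupp.single_eq_same, mul_one] at this
  exact this.inj_right (isHomogeneous_C σ r) (C_ne_zero.mpr hr)

lemma exists_generatorCoeff_eq :
    ∃ r : K, r ≠ 0 ∧ ∀ m b c, F.generatorCoeff m b = r * F.coeffMatrix 0 m b c := by
  obtain ⟨r, hr, hε⟩ := F.exists_ε_eq_C_mul hI
  refine ⟨r, hr, fun m b c => ?_⟩
  rw [generatorCoeff, generator, hε _ c, coeff_C_mul]
  rfl

lemma degree_eq_deg_of_generatorCoeff_ne_zero {m : σ →₀ ℕ} {b : F.B 1}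
    (h : F.generatorCoeff m b ≠ 0) : m.degree = F.deg 1 b := by
  obtain ⟨_, c, -⟩ := F.exists_coeffMatrix_ne_zero 0 b
  obtain ⟨r, -, hr⟩ := F.exists_generatorCoeff_eq hI
  rw [hr m b c] at h
  rw [← F.degree_add_deg (right_ne_zero_of_mul h), F.deg_zero_eq_zero hI, add_zero]

lemma eq_zero_of_forall_dotProduct_generatorCoeff {u : F.B 1 → K}
    (h : ∀ m, u ⬝ᵥ F.generatorCoeff m = 0) : u = 0 := by
  obtain ⟨r, hr, hcoeff⟩ := F.exists_generatorCoeff_eq hI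
  refine F.eq_zero_of_forall_vecMul_coeffMatrix 0 u fun m => funext fun c => ?_
  have : F.generatorCoeff m = r • fun b => F.coeffMatrix 0 m b c := funext fun b => hcoeff m b c
  have := this ▸ h m
  rw [dotProduct_smul] at this
  exact (smul_eq_zero.mp this).resolve_left hr

end Augmentation

lemma add_two_le_deg (hI : I ≤ idealOfVars σ K ^ 2) (i : ℕ) (b : F.B (i + 1)) :
    i + 2 ≤ F.deg (i + 1) b := by
  induction i with
  | zero =>
    obtain ⟨m, c, hm⟩ := F.exists_coeffMatrix_ne_zero 0 b
    obtain ⟨r, hr, hcoeff⟩ :=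
      F.exists_generatorCoeff_eq (hI.trans (Ideal.pow_le_self two_ne_zero))
    have coeff_ne_zero : F.generatorCoeff m b ≠ 0 := hcoeff m b c ▸ mul_ne_zero hr hm
    have := (mem_pow_idealOfVars_iff 2 _).mp (hI (F.ε_d_mem _)) m
      (mem_support_iff.mpr coeff_ne_zero)
    have := F.degree_add_deg hm
    omega
  | succ i ih =>
    obtain ⟨m, c, hm⟩ := F.exists_coeffMatrix_ne_zero (i + 1) b
    have := F.degree_add_deg hm
    have := F.degree_ne_zero_of_coeffMatrix_ne_zero hm
    have := ih c
    omega

lemma eq_zero_of_forall_vecMul_linearPart (hI : I ≤ idealOfVars σ K ^ 2) {i : ℕ}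
    {u : F.B (i + 2) → K} (hu : ∀ b, u b ≠ 0 → F.deg (i + 2) b = i + 3)
    (h : ∀ v, u ᵥ* F.linearPart (i + 1) v = 0) : u = 0 := by
  refine F.eq_zero_of_forall_vecMul_coeffMatrix (i + 1) u fun m => funext fun c => ?_
  by_contra hne
  obtain ⟨b, -, hb⟩ := Finset.exists_ne_zero_of_sum_ne_zero hne
  have coeff_ne_zero := right_ne_zero_of_mul hb
  have deg_b := hu b (left_ne_zero_of_mul hb)
  have degree_eq_one : m.degree = 1 := by
    have degree_add := F.degree_add_deg coeff_ne_zero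
    rw [deg_b] at degree_add
    have := F.degree_ne_zero_of_coeffMatrix_ne_zero coeff_ne_zero
    have := F.add_two_le_deg hI i c
    omega
  obtain ⟨v, rfl⟩ : m ∈ Set.range fun v => Finsupp.single v 1 := by
    rw [Finsupp.range_single_one]
    exact degree_eq_one
  exact hne (congrFun (h v) c)

/-- The functional `W` on `F_{k+1} ⊗ K`, given by its values on the basis, is annihilated by all
variables outside `T`. A variable sends functionals on `F_{k+1} ⊗ K` to functionals on
`F_{k+2} ⊗ K` through the linear part of the differential. -/
def AnnihilatedOff (k : ℕ) (T : Finset σ) (W : F.B (k + 1) → K) : Prop :=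
  ∀ v ∉ T, F.linearPart (k + 1) v *ᵥ W = 0

variable {F} in
lemma AnnihilatedOff.linearPart_mulVec [DecidableEq σ] {k : ℕ} {T : Finset σ}
    {W : F.B (k + 1) → K} (hW : F.AnnihilatedOff k T W) (v : σ) :
    F.AnnihilatedOff (k + 1) (T.erase v) (F.linearPart (k + 1) v *ᵥ W) := by
  intro w hw
  rw [Matrix.mulVec_mulVec]
  obtain rfl | hne := eq_or_ne w v
  · rw [linearPart_mul_self, Matrix.zero_mulVec]
  · rw [linearPart_mul_comm_neg _ _ hne, Matrix.neg_mulVec, ← Matrix.mulVec_mulVec,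
      hW w fun hT => hw (Finset.mem_erase.mpr ⟨hne, hT⟩), Matrix.mulVec_zero, neg_zero]

section Quadrics

variable {Y : Finset σ} (hI : I ≤ squarefreeQuadricIdeal K Y ⊔ idealOfVars σ K ^ 3)
include hI

lemma annihilatedOff_generatorCoeff [DecidableEq σ] (p q : σ) :
    F.AnnihilatedOff 0 ((Y.erase p).erase q)
      (F.generatorCoeff (Finsupp.single p 1 + Finsupp.single q 1)) := by
  intro v hv
  set m := Finsupp.single v 1 + (Finsupp.single p 1 + Finsupp.single q 1) with hm
  have generator_mem (c : F.B 1) := hI (F.ε_d_mem (Finsupp.single c 1))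
  have other_term {w : σ} (hw : w ∈ m.support) (hwv : w ≠ v) (c : F.B 1) :
      coeff (m - Finsupp.single w 1) (F.generator c) = 0 := by
    by_contra hne
    obtain ⟨p', hp', q', hq', hpq', heq⟩ | degree_ge :=
      exists_eq_add_or_three_le_degree (generator_mem c) (mem_support_iff.mpr hne)
    · exact tsub_single_ne_of_notMem_erase hv hwv hp' hq' hpq' heq
    · have := congrArg Finsupp.degree (tsub_add_cancel_of_le (single_one_le_of_mem_support hw))
      simp only [hm, map_add, Finsupp.degree_single] at this degree_ge
      omega
  have product_coeff (b : F.B 2) (c : F.B 1) :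
      coeff m (F.differentialMatrix 1 b c * F.generator c) =
        F.linearPart 1 v b c *
          F.generatorCoeff (Finsupp.single p 1 + Finsupp.single q 1) c := by
    rw [coeff_mul_eq_sum_support (F.coeff_zero_differentialMatrix 1 b c),
      Finset.sum_eq_single_of_mem v, hm, add_tsub_cancel_left]
    · rfl
    · simp [hm]
    · intro w hw hwv
      rw [other_term hw hwv, mul_zero]
    · intro a ha
      have := (mem_pow_idealOfVars_iff 2 _).mp
        (squarefreeQuadricIdeal_sup_le_idealOfVars_sq Y (generator_mem c)) a ha
      simp only [hm, map_add, Finsupp.degree_single]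
      omega
  ext b
  have := congrArg (coeff m) (congrFun F.differentialMatrix_mulVec_generator b)
  rw [Matrix.mulVec, dotProduct, coeff_sum] at this
  simp only [product_coeff] at this
  exact this

lemma eq_zero_of_forall_dotProduct_quadric {u : F.B 1 → K} (hu : ∀ b, u b ≠ 0 → F.deg 1 b = 2)
    (h : ∀ p ∈ Y, ∀ q ∈ Y, p ≠ q →
      u ⬝ᵥ F.generatorCoeff (Finsupp.single p 1 + Finsupp.single q 1) = 0) : u = 0 := by
  have hI' : I ≤ idealOfVars σ K :=
    hI.trans (squarefreeQuadricIdeal_sup_le_idealOfVars Y)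
  refine F.eq_zero_of_forall_dotProduct_generatorCoeff hI' fun m => ?_
  by_contra hne
  obtain ⟨b, -, hb⟩ := Finset.exists_ne_zero_of_sum_ne_zero hne
  have coeff_ne_zero := right_ne_zero_of_mul hb
  obtain ⟨p, hp, q, hq, hpq, rfl⟩ | degree_ge := exists_eq_add_or_three_le_degree
    (hI (F.ε_d_mem _)) (mem_support_iff.mpr coeff_ne_zero)
  · exact hne (h p hp q hq hpq)
  · have := F.degree_eq_deg_of_generatorCoeff_ne_zero hI' coeff_ne_zero
    have := hu b (left_ne_zero_of_mul hb)
    omega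

lemma eq_zero_of_forall_annihilatedOff (k : ℕ) {u : F.B (k + 1) → K}
    (hu : ∀ b, u b ≠ 0 → F.deg (k + 1) b = k + 2)
    (h : ∀ T W, F.AnnihilatedOff k T W → T.card + (k + 2) ≤ Y.card → u ⬝ᵥ W = 0) : u = 0 := by
  classical
  induction k with
  | zero =>
    refine F.eq_zero_of_forall_dotProduct_quadric hI hu fun p hp q hq hpq => ?_
    refine h _ _ (F.annihilatedOff_generatorCoeff hI p q) ?_
    have := Finset.card_erase_add_one hp
    have := Finset.card_erase_add_one (Finset.mem_erase.mpr ⟨hpq.symm, hq⟩)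
    omega
  | succ k ih =>
    refine F.eq_zero_of_forall_vecMul_linearPart
      (hI.trans (squarefreeQuadricIdeal_sup_le_idealOfVars_sq Y)) hu
      fun v => ih (fun c hc => ?_) fun T W hW hT => ?_
    · obtain ⟨b, -, hb⟩ := Finset.exists_ne_zero_of_sum_ne_zero hc
      have := F.degree_add_deg (right_ne_zero_of_mul hb)
      rw [Finsupp.degree_single, hu b (left_ne_zero_of_mul hb)] at this
      omega
    · rw [← Matrix.dotProduct_mulVec]
      by_cases hv : v ∈ T
      · refine h _ _ (hW.linearPart_mulVec v) ?_
        have := Finset.card_erase_add_one hv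
        omega
      · rw [hW v hv, dotProduct_zero]

theorem betti_add_one_eq_zero {i : ℕ} (hY : Y.card ≤ i) : F.betti i (i + 1) = 0 := by
  classical
  suffices ∀ b, F.deg i b ≠ i + 1 by
    have : IsEmpty {b : F.B i // F.deg i b = i + 1} := ⟨fun b => this b.1 b.2⟩
    exact Nat.card_of_isEmpty
  intro b hb
  cases i with
  | zero =>
    have := F.deg_zero_eq_zero
      (hI.trans (squarefreeQuadricIdeal_sup_le_idealOfVars Y)) b
    omega
  | succ k =>
    have single_eq_zero : (Pi.single b 1 : F.B (k + 1) → K) = 0 := by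
      refine F.eq_zero_of_forall_annihilatedOff hI k (fun c hc => ?_) fun T W _ hT => ?_
      · obtain rfl : c = b := by
          by_contra hne
          exact hc (Pi.single_eq_of_ne hne 1)
        exact hb
      · omega
    exact one_ne_zero (Pi.single_eq_zero_iff.mp single_eq_zero)

end Quadrics

end MinGradedFreeRes

section Diamond

variable (K : Type*) [Field K] (n : ℕ) (hn : 1 ≤ n)

lemma diamondIni_isHomogeneous :
    (diamondIni K n hn).IsHomogeneous (homogeneousSubmodule (Fin (n + 2)) K) := by
  refine Ideal.homogeneous_span _ _ ?_
  rintro f ((⟨i, j, -, rfl⟩ | ⟨k, -, rfl⟩) | rfl)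
  · exact ⟨2, (isHomogeneous_X K _).mul (isHomogeneous_X K _)⟩
  · exact ⟨3, ((isHomogeneous_X K _).mul (isHomogeneous_X K _)).mul (isHomogeneous_X K _)⟩
  · exact ⟨4, ((isHomogeneous_X K _).mul (isHomogeneous_X_pow _ 2)).mul (isHomogeneous_X K _)⟩

lemma diamondIni_le_squarefreeQuadricIdeal_sup :
    diamondIni K n hn ≤
      squarefreeQuadricIdeal K (Finset.univ.image fun i : Fin n => i.succ.castSucc) ⊔
        idealOfVars (Fin (n + 2)) K ^ 3 := by
  have X_mem (v : Fin (n + 2)) : X v ∈ idealOfVars (Fin (n + 2)) K :=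
    Ideal.subset_span ⟨v, rfl⟩
  have X_mul_mem (u v w : Fin (n + 2)) :
      (X u * X v * X w : MvPolynomial (Fin (n + 2)) K) ∈ idealOfVars (Fin (n + 2)) K ^ 3 := by
    rw [pow_three']
    exact Ideal.mul_mem_mul (Ideal.mul_mem_mul (X_mem u) (X_mem v)) (X_mem w)
  rw [diamondIni, Ideal.span_le]
  rintro f ((⟨i, j, hij, rfl⟩ | ⟨k, -, rfl⟩) | rfl)
  · have y_mem (k : Fin n) := Finset.mem_image_of_mem (fun i : Fin n => i.succ.castSucc)
      (Finset.mem_univ k)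
    have y_ne : i.succ.castSucc ≠ j.succ.castSucc := fun h =>
      hij.ne (Fin.succ_injective _ (Fin.castSucc_injective _ h))
    exact Ideal.mem_sup_left (Ideal.subset_span ⟨_, y_mem i, _, y_mem j, y_ne, rfl⟩)
  · exact Ideal.mem_sup_right (X_mul_mem _ _ _)
  · rw [pow_two, ← mul_assoc]
    exact Ideal.mem_sup_right (Ideal.mul_mem_right _ _ (X_mul_mem _ _ _))

end Diamond

theorem diamond_ini_betti_n_np1_general (K : Type*) [Field K] (n : ℕ) (hn : 1 ≤ n) :
    Nonempty (MinGradedFreeRes K (Fin (n + 2)) (diamondIni K n hn)) ∧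
      ∀ F : MinGradedFreeRes K (Fin (n + 2)) (diamondIni K n hn),
        ∀ i, n ≤ i → F.betti i (i + 1) = 0 := by
  have hle := diamondIni_le_squarefreeQuadricIdeal_sup K n hn
  refine ⟨MinGradedFreeRes.nonempty_of_isHomogeneous (diamondIni_isHomogeneous K n hn) ?_,
    fun F i hi => F.betti_add_one_eq_zero hle (le_trans ?_ hi)⟩
  · exact hle.trans (squarefreeQuadricIdeal_sup_le_idealOfVars _)
  · exact Finset.card_image_le.trans_eq (Finset.card_fin n)

theorem diamond_ini_betti_n_np1 (K : Type*) [Field K] (n : ℕ) (hn : 3 ≤ n) :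
    Nonempty (MinGradedFreeRes K (Fin (n + 2)) (diamondIni K n (by omega))) ∧
      ∀ F : MinGradedFreeRes K (Fin (n + 2)) (diamondIni K n (by omega)),
        F.betti n (n + 1) = 0 := by
  obtain ⟨exists_resolution, betti_eq_zero⟩ := diamond_ini_betti_n_np1_general K n (by omega)
  exact ⟨exists_resolution, fun F => betti_eq_zero F n le_rfl⟩
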